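/- arXiv:1511.03876 — 5 statements merged into one kernel-verified Lean document; each statement's English description precedes it below -/
import Mathlib

section
/- Let n ≥ 1 and let y ∈ ℝⁿ with y_j ≥ 0 for all j, and let ω ∈ ℝⁿ with ω_1 ≥ ω_2 ≥ ⋯ ≥ ω_n ≥ 0. Then ∑_{i=1}^n ω_i y_{(i)} = min { ∑_{j=1}^n v_j + ∑_{i=1}^n w_i : v, w ∈ ℝⁿ, v_j + w_i ≥ ω_i y_j for all i, j }, and this minimum is attained. Consequently, for the OWA aggregated loss L_OWA built from nonnegative losses, the optimal value inf_{P ≥ 0} L_OWA(P) equals the optimal value of the continuous program minimizing ∑_j v_j + ∑_i w_i over P ≥ 0 and v, w ∈ ℝⁿ subject to v_j + w_i ≥ ω_i y_j(P) for all i, j. -/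
/-!
Feasibility of `(v, w)` gives weak duality: summing the constraints along the pairs `(i, σ i)`, where
`σ` sorts `y` non-increasingly, bounds `∑ v + ∑ w` below by the OWA value. For attainment, put
`z = y ∘ σ`. Since `ω` and `z` are both non-increasing, there is a potential `p`, a discrete
analogue of `∫ ω dz`, with `ω i * (z k - z i) ≤ p k - p i` for all `i, k` (`exists_potential`).
Then `v (σ k) = p k` and `w i = ω i * z i - p i` are feasible, with all constraints on the pairs
`(i, σ i)` tight. The equality of the two infima follows by applying this pointwise in `P`.
-/

/-- The value `y ↦ ∑ ωᵢ y₍ᵢ₎` of the OWA aggregation of `y`, where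
`y₍₁₎ ≥ ⋯ ≥ y₍ₙ₎` is the non-increasing rearrangement of `y`. -/
noncomputable def owa {n : ℕ} (ω y : Fin n → ℝ) : ℝ :=
  ∑ i, ω i * y (Tuple.sort (fun j => -y j) i)

/-- The discrete Stieltjes sum `p k = ∑_{m < k} f m (g (m + 1) - g m)` of two non-increasing
sequences has `f i` as a subgradient at `i`, with respect to `g`. -/
lemma exists_potential_nat (f g : ℕ → ℝ) (hf : Antitone f) (hg : Antitone g) :
    ∃ p : ℕ → ℝ, ∀ i k, f i * (g k - g i) ≤ p k - p i := by
  let p : ℕ → ℝ := fun k => ∑ m ∈ Finset.range k, f m * (g (m + 1) - g m)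
  have hp : ∀ k, p (k + 1) = p k + f k * (g (k + 1) - g k) := fun k =>
    Finset.sum_range_succ _ _
  have key : ∀ i k, i ≤ k →
      f i * (g k - g i) ≤ p k - p i ∧ f k * (g i - g k) ≤ p i - p k := by
    intro i k hik
    induction k, hik using Nat.le_induction with
    | base => simp
    | succ k hik ih =>
      have h1 := hf hik
      have h2 := hf (Nat.le_succ k)
      have h3 := hg hik
      have h4 := hg (Nat.le_succ k)
      simp only [Nat.succ_eq_add_one] at h2 h4
      rw [hp]
      constructor
      · nlinarith [mul_nonneg (sub_nonneg.2 h1) (sub_nonneg.2 h4)]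
      · nlinarith [mul_nonneg (sub_nonneg.2 h2) (sub_nonneg.2 h4),
          mul_nonneg (sub_nonneg.2 h2) (sub_nonneg.2 h3)]
  refine ⟨p, fun i k => ?_⟩
  rcases le_total i k with h | h
  · exact (key i k h).1
  · exact (key k i h).2

lemma exists_potential {n : ℕ} (f g : Fin n → ℝ) (hf : Antitone f) (hg : Antitone g) :
    ∃ p : Fin n → ℝ, ∀ i k, f i * (g k - g i) ≤ p k - p i := by
  rcases n with _ | n
  · exact ⟨fun _ => 0, fun i => i.elim0⟩
  -- Extend both sequences to `ℕ` by repeating their last value.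
  let e : ℕ → Fin (n + 1) := fun m => ⟨min m n, by omega⟩
  have he : Monotone e := fun a b h => by
    change min a n ≤ min b n
    exact min_le_min_right n h
  have hei : ∀ i : Fin (n + 1), e i = i := fun i => Fin.ext (by
    change min (i : ℕ) n = i
    omega)
  obtain ⟨p, hp⟩ := exists_potential_nat (f ∘ e) (g ∘ e)
    (hf.comp_monotone he) (hg.comp_monotone he)
  refine ⟨fun i => p i, fun i k => ?_⟩
  simpa [hei] using hp i k

lemma owa_isLeast {n : ℕ} (ω y : Fin n → ℝ) (hω : Antitone ω) :
    IsLeast {s : ℝ | ∃ v w : Fin n → ℝ,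
      (∀ i j : Fin n, ω i * y j ≤ v j + w i) ∧
      s = (∑ j, v j) + ∑ i, w i} (owa ω y) := by
  unfold owa
  have hz : Antitone (fun i => y (Tuple.sort (fun j => -y j) i)) := fun i k h =>
    neg_le_neg_iff.1 (Tuple.monotone_sort (fun j => -y j) h)
  generalize Tuple.sort (fun j => -y j) = σ at hz ⊢
  constructor
  · obtain ⟨p, hp⟩ := exists_potential ω _ hω hz
    refine ⟨fun j => p (σ.symm j), fun i => ω i * y (σ i) - p i, fun i j => ?_, ?_⟩
    · have h := hp i (σ.symm j)
      simp only [Equiv.apply_symm_apply] at h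
      linarith
    · rw [Equiv.sum_comp σ.symm p, Finset.sum_sub_distrib]
      ring
  · rintro s ⟨v, w, h, rfl⟩
    rw [← Equiv.sum_comp σ v, ← Finset.sum_add_distrib]
    exact Finset.sum_le_sum fun i _ => h i (σ i)

/-- Convex case LP reformulation: for non-increasing nonnegative weights
`ω₁ ≥ ⋯ ≥ ω_n ≥ 0` and nonnegative values `y`, the OWA value `∑ ωᵢ y₍ᵢ₎` equals the
attained minimum of `∑ⱼ vⱼ + ∑ᵢ wᵢ` subject to `vⱼ + wᵢ ≥ ωᵢ yⱼ`; consequently, for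
nonnegative quadratic expert losses `yᵢ(P) = cᵢ (P² − 2 aᵢ P + bᵢ)`, the optimal value
`inf_{P ≥ 0} L_OWA(P)` equals the optimal value of the corresponding continuous
program. -/
theorem owa_convex_case_lp_reformulation {n : ℕ} (hn : 1 ≤ n) (ω : Fin n → ℝ)
    (hω : ∀ i j : Fin n, i ≤ j → ω j ≤ ω i) (hω0 : ∀ i, 0 ≤ ω i)
    (a b c : Fin n → ℝ) (hb : ∀ i, (a i) ^ 2 ≤ b i)
    (hc : ∀ i, 0 ≤ c i) (hcsum : ∑ i, c i = 1) :
    (∀ y : Fin n → ℝ, (∀ j, 0 ≤ y j) →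
      IsLeast {s : ℝ | ∃ v w : Fin n → ℝ,
          (∀ i j : Fin n, ω i * y j ≤ v j + w i) ∧
          s = (∑ j, v j) + ∑ i, w i} (owa ω y)) ∧
    sInf {L : ℝ | ∃ P : ℝ, 0 ≤ P ∧
        L = owa ω (fun i => c i * (P ^ 2 - 2 * a i * P + b i))} =
      sInf {s : ℝ | ∃ P : ℝ, 0 ≤ P ∧ ∃ v w : Fin n → ℝ,
        (∀ i j : Fin n, ω i * (c j * (P ^ 2 - 2 * a j * P + b j)) ≤ v j + w i) ∧
        s = (∑ j, v j) + ∑ i, w i} := by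
  refine ⟨fun y _ => owa_isLeast ω y hω, ?_⟩
  apply csInf_eq_csInf_of_forall_exists_le
  · rintro _ ⟨P, hP, rfl⟩
    exact ⟨_, ⟨P, hP, (owa_isLeast ω _ hω).1⟩, le_rfl⟩
  · rintro _ ⟨P, hP, hs⟩
    exact ⟨_, ⟨P, hP, rfl⟩, (owa_isLeast ω _ hω).2 hs⟩
end

section
/- Let n ≥ 1, let c_i > 0 for all i with ∑_{i=1}^n c_i = 1, and let ω ∈ ℝⁿ with ω_i ≥ 0 for all i and ω_k > 0 for some k. Then every global minimizer P* of the OWA aggregated loss L_OWA over ℝ satisfies min_{1 ≤ i ≤ n} a_i ≤ P* ≤ max_{1 ≤ i ≤ n} a_i. In particular, the OWA premium is at least the smallest expert mean (risk loading, property P1) and at most the largest expert mean, hence at most the essential supremum of the risk (maximal loss, property P2). -/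
/-- Strict pointwise domination passes to each order statistic. The top `i + 1` entries of `y` and
the bottom `n - i` entries of `z` are occupied by index sets of total size `n + 1`, so they share an
index `j`, and `y₍ᵢ₎ ≤ y j < z j ≤ z₍ᵢ₎`. -/
lemma decreasing_rearrangement_lt {n : ℕ} {y z : Fin n → ℝ} (h : ∀ i, y i < z i) (i : Fin n) :
    y (Tuple.sort (fun j => -y j) i) < z (Tuple.sort (fun j => -z j) i) := by
  have hy := Tuple.monotone_sort (fun j => -y j)
  have hz := Tuple.monotone_sort (fun j => -z j)
  set σ := Tuple.sort (fun j => -y j)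
  set τ := Tuple.sort (fun j => -z j)
  have hne : ¬ Disjoint ((Finset.Iic i).map σ.toEmbedding) ((Finset.Ici i).map τ.toEmbedding) := by
    intro hd
    have hcard := Finset.card_union_of_disjoint hd
    have hle := Finset.card_le_univ
      ((Finset.Iic i).map σ.toEmbedding ∪ (Finset.Ici i).map τ.toEmbedding)
    simp only [Finset.card_map, Fin.card_Iic, Fin.card_Ici] at hcard
    rw [hcard, Fintype.card_fin] at hle
    omega
  obtain ⟨j, hjσ, hjτ⟩ := Finset.not_disjoint_iff.mp hne
  obtain ⟨p, hp, hpj⟩ := Finset.mem_map.mp hjσ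
  obtain ⟨q, hq, hqj⟩ := Finset.mem_map.mp hjτ
  have h1 := hy (Finset.mem_Iic.mp hp)
  have h2 := hz (Finset.mem_Ici.mp hq)
  simp only [Equiv.coe_toEmbedding] at hpj hqj
  simp only [Function.comp_apply, hpj, hqj] at h1 h2
  linarith [h j]

lemma owa_lt_owa {n : ℕ} {ω y z : Fin n → ℝ} (hω0 : ∀ i, 0 ≤ ω i) (hωpos : ∃ k, 0 < ω k)
    (h : ∀ i, y i < z i) : owa ω y < owa ω z := by
  obtain ⟨k, hk⟩ := hωpos
  exact Finset.sum_lt_sum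
    (fun i _ => mul_le_mul_of_nonneg_left (decreasing_rearrangement_lt h i).le (hω0 i))
    ⟨k, Finset.mem_univ k, mul_lt_mul_of_pos_left (decreasing_rearrangement_lt h k) hk⟩

/-- Risk loading and maximal loss for OWA premiums: every global minimizer `P*` of the
OWA aggregated loss lies between the smallest and the largest expert mean `aᵢ`. -/
theorem owa_premium_between_min_and_max_mean {n : ℕ} (hn : 1 ≤ n)
    (ω a b c : Fin n → ℝ) (hc : ∀ i, 0 < c i) (hcsum : ∑ i, c i = 1)
    (hω0 : ∀ i, 0 ≤ ω i) (hωpos : ∃ k, 0 < ω k) :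
    ∀ Pstar : ℝ,
      (∀ P : ℝ, owa ω (fun i => c i * (Pstar ^ 2 - 2 * a i * Pstar + b i)) ≤
          owa ω (fun i => c i * (P ^ 2 - 2 * a i * P + b i))) →
      sInf (Set.range a) ≤ Pstar ∧ Pstar ≤ sSup (Set.range a) := by
  intro Pstar hmin
  have hfin := Set.finite_range a
  constructor
  · by_contra! hlt
    refine absurd (hmin (sInf (Set.range a))) (not_le.mpr (owa_lt_owa hω0 hωpos fun i => ?_))
    have hi : sInf (Set.range a) ≤ a i := csInf_le hfin.bddBelow ⟨i, rfl⟩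
    refine mul_lt_mul_of_pos_left ?_ (hc i)
    -- With `m` the infimum, `L(P*) - L(m) = (m - P*) (2 aᵢ - m - P*)`.
    nlinarith
  · by_contra! hlt
    refine absurd (hmin (sSup (Set.range a))) (not_le.mpr (owa_lt_owa hω0 hωpos fun i => ?_))
    have hi : a i ≤ sSup (Set.range a) := le_csSup hfin.bddAbove ⟨i, rfl⟩
    refine mul_lt_mul_of_pos_left ?_ (hc i)
    nlinarith
end

section
/- Let n ≥ 1, c_i ≥ 0 with ∑_{i=1}^n c_i = 1, ω ∈ ℝⁿ, and let λ > 0 and μ ≥ 0. For each i define the transformed loss L'_i(Q) = Q² − 2(λ a_i + μ) Q + (λ² b_i + 2 λ μ a_i + μ²), and let L'_OWA be the corresponding OWA aggregated loss. Then (i) L'_OWA(λ P + μ) = λ² L_OWA(P) for all P ∈ ℝ, and (ii) P* is a global minimizer of L_OWA over ℝ if and only if λ P* + μ is a global minimizer of L'_OWA over ℝ. This is the linear invariance property (P3): the OWA premium of the risk a X + b equals a times the OWA premium of X plus b. -/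
/-- The permutation sorting `y` decreasingly also sorts `k • y` decreasingly when `k ≥ 0`, and any
two permutations that sort a tuple produce the same sorted tuple. -/
lemma owa_const_mul {n : ℕ} (ω y : Fin n → ℝ) {k : ℝ} (hk : 0 ≤ k) :
    owa ω (fun i => k * y i) = k * owa ω y := by
  have hmono : Monotone ((fun j => -(k * y j)) ∘ Tuple.sort (fun j => -y j)) := by
    intro i j hij
    have h := mul_le_mul_of_nonneg_left (Tuple.monotone_sort (fun j => -y j) hij) hk
    simpa using h
  have heq := Tuple.comp_sort_eq_comp_iff_monotone.2 hmono
  unfold owa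
  rw [Finset.mul_sum]
  refine Finset.sum_congr rfl fun i _ => ?_
  have hi := congrFun heq i
  simp only [Function.comp_apply, neg_inj] at hi
  beta_reduce
  rw [← hi]
  ring

/-- Linear invariance (P3) of OWA premiums: for `l > 0`, `m ≥ 0` and the transformed
losses `L'ᵢ(Q) = Q² − 2(l aᵢ + m) Q + (l² bᵢ + 2 l m aᵢ + m²)` (corresponding to the
risk `l X + m`), we have `L'_OWA(l P + m) = l² L_OWA(P)` for all `P`, and `P*` globally
minimizes `L_OWA` iff `l P* + m` globally minimizes `L'_OWA`. -/
theorem owa_premium_linear_invariance {n : ℕ} (hn : 1 ≤ n)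
    (ω a b c : Fin n → ℝ) (hc : ∀ i, 0 ≤ c i) (hcsum : ∑ i, c i = 1)
    (l m : ℝ) (hl : 0 < l) (hm : 0 ≤ m) :
    (∀ P : ℝ,
      owa ω (fun i => c i * ((l * P + m) ^ 2 - 2 * (l * a i + m) * (l * P + m) +
          (l ^ 2 * b i + 2 * l * m * a i + m ^ 2))) =
        l ^ 2 * owa ω (fun i => c i * (P ^ 2 - 2 * a i * P + b i))) ∧
    (∀ Pstar : ℝ,
      (∀ P : ℝ, owa ω (fun i => c i * (Pstar ^ 2 - 2 * a i * Pstar + b i)) ≤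
          owa ω (fun i => c i * (P ^ 2 - 2 * a i * P + b i))) ↔
      (∀ Q : ℝ,
        owa ω (fun i => c i * ((l * Pstar + m) ^ 2 - 2 * (l * a i + m) * (l * Pstar + m) +
            (l ^ 2 * b i + 2 * l * m * a i + m ^ 2))) ≤
          owa ω (fun i => c i * (Q ^ 2 - 2 * (l * a i + m) * Q +
            (l ^ 2 * b i + 2 * l * m * a i + m ^ 2))))) := by
  have key : ∀ P : ℝ,
      owa ω (fun i => c i * ((l * P + m) ^ 2 - 2 * (l * a i + m) * (l * P + m) +
          (l ^ 2 * b i + 2 * l * m * a i + m ^ 2))) =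
        l ^ 2 * owa ω (fun i => c i * (P ^ 2 - 2 * a i * P + b i)) := by
    intro P
    rw [← owa_const_mul _ _ (sq_nonneg l)]
    congr 1
    funext i
    ring
  refine ⟨key, fun Pstar => ⟨fun h Q => ?_, fun h P => ?_⟩⟩
  · obtain ⟨P, rfl⟩ : ∃ P, Q = l * P + m := ⟨(Q - m) / l, by field_simp; ring⟩
    rw [key, key]
    exact mul_le_mul_of_nonneg_left (h P) (sq_nonneg l)
  · have hP := h (l * P + m)
    rw [key, key] at hP
    exact le_of_mul_le_mul_left hP (pow_pos hl 2)
end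

section
/- Let n ≥ 1, let C ≥ 0, and suppose a_i = C and b_i = C² for all i (so L_i(P) = (P − C)² for every expert i). Let c_i ≥ 0 with ∑_{i=1}^n c_i = 1 and let ω ∈ ℝⁿ with ω_i ≥ 0 for all i and ∑_{i=1}^n ω_i c_{(i)} > 0, where c_{(1)} ≥ ⋯ ≥ c_{(n)} is the non-increasing rearrangement of (c_1, …, c_n). Then L_OWA(P) = (∑_{i=1}^n ω_i c_{(i)}) (P − C)² for all P, and its unique global minimizer over ℝ is P* = C. This is the constant risk property (P4): the OWA premium of the constant risk C equals C. -/
/-- The OWA aggregation is positively homogeneous: scaling by `k ≥ 0` keeps a non-increasing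
arrangement non-increasing, and any two such arrangements of a tuple agree, whatever
permutations `Tuple.sort` picks to break ties. -/
theorem owa_mul_const {n : ℕ} (ω y : Fin n → ℝ) {k : ℝ} (hk : 0 ≤ k) :
    owa ω (fun i => y i * k) = owa ω y * k := by
  have hmono : Monotone ((fun j => -(y j * k)) ∘ Tuple.sort (fun j => -y j)) := by
    intro i j hij
    have h := Tuple.monotone_sort (fun j => -y j) hij
    simp only [Function.comp_apply] at h ⊢
    nlinarith
  have heq := Tuple.comp_sort_eq_comp_iff_monotone.2 hmono
  unfold owa
  rw [Finset.sum_mul]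
  refine Finset.sum_congr rfl fun i _ => ?_
  have h := congrFun heq i
  simp only [Function.comp_apply, neg_inj] at h
  rw [mul_assoc, h]

/-- Constant risk property (P4): if every expert's loss is `Lᵢ(P) = (P − C)²`
(i.e. `aᵢ = C`, `bᵢ = C²`), and `∑ ωᵢ c₍ᵢ₎ > 0` where `c₍ᵢ₎` is the non-increasing
rearrangement of the confidence weights, then
`L_OWA(P) = (∑ ωᵢ c₍ᵢ₎)(P − C)²`, whose unique global minimizer is `P* = C`. -/
theorem owa_premium_constant_risk {n : ℕ} (hn : 1 ≤ n) (C : ℝ) (hC : 0 ≤ C)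
    (ω a b c : Fin n → ℝ) (ha : ∀ i, a i = C) (hb : ∀ i, b i = C ^ 2)
    (hc : ∀ i, 0 ≤ c i) (hcsum : ∑ i, c i = 1)
    (hω0 : ∀ i, 0 ≤ ω i) (hpos : 0 < owa ω c) :
    (∀ P : ℝ, owa ω (fun i => c i * (P ^ 2 - 2 * a i * P + b i)) =
        owa ω c * (P - C) ^ 2) ∧
    (∀ P : ℝ, owa ω (fun i => c i * (C ^ 2 - 2 * a i * C + b i)) ≤
        owa ω (fun i => c i * (P ^ 2 - 2 * a i * P + b i))) ∧
    (∀ P : ℝ,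
      (∀ Q : ℝ, owa ω (fun i => c i * (P ^ 2 - 2 * a i * P + b i)) ≤
          owa ω (fun i => c i * (Q ^ 2 - 2 * a i * Q + b i))) → P = C) := by
  have key : ∀ P : ℝ, owa ω (fun i => c i * (P ^ 2 - 2 * a i * P + b i)) =
      owa ω c * (P - C) ^ 2 := by
    intro P
    rw [← owa_mul_const ω c (sq_nonneg (P - C))]
    congr 1
    funext i
    rw [ha, hb]
    ring
  refine ⟨key, fun P => ?_, fun P hP => ?_⟩
  · rw [key, key, sub_self]
    have := mul_nonneg hpos.le (sq_nonneg (P - C))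
    simpa using this
  · have h := hP C
    rw [key, key, sub_self] at h
    have hsq : (P - C) ^ 2 ≤ 0 := by
      by_contra! hlt
      have := mul_pos hpos hlt
      linarith
    have h0 : P - C = 0 := pow_eq_zero_iff two_ne_zero |>.1 (le_antisymm hsq (sq_nonneg _))
    linarith
end

section
/- Define f_X(P) = max(P² − (2/5)P + 6/25, P² − (1/5)P + 11/100), f_Y(P) = max(P² − (3/5)P + 39/100, P² − (7/10)P + 189/400), and f_{X+Y}(P) = max(P² − P + 3/4, P² − (9/10)P + 261/400). Then f_X has unique global minimizer P*_X = 1/5 over ℝ, f_Y has unique global minimizer P*_Y = 7/20, and f_{X+Y} has unique global minimizer P*_{X+Y} = 1/2; in particular P*_{X+Y} = 1/2 ≠ 11/20 = P*_X + P*_Y, so the OWA premium principle with the MAX criterion is not additive (property P5 fails). -/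
/-!
In each of the three maxima one parabola dominates the other at its own vertex `c`. Since the
maximum lies above that parabola, which is strictly minimized at `c`, and agrees with it at `c`,
the point `c` is the unique minimizer of the maximum. This is `max_ge_of_vertex` and
`eq_of_max_minimal`. The dominating parabola is the first one for `X` and `X + Y`, and the second
one for `Y`.
-/

/-- If `f` is a monic parabola with vertex `c` and `g c ≤ f c`, then `c` minimizes `max f g`. -/
lemma max_ge_of_vertex {f g : ℝ → ℝ} {c : ℝ} (hf : ∀ P, f P = (P - c) ^ 2 + f c)
    (hg : g c ≤ f c) (P : ℝ) : max (f c) (g c) ≤ max (f P) (g P) := by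
  rw [max_eq_left hg]
  exact le_max_of_le_left (by rw [hf P]; linarith [sq_nonneg (P - c)])

/-- Under the hypotheses of `max_ge_of_vertex`, the vertex `c` is the only minimizer. -/
lemma eq_of_max_minimal {f g : ℝ → ℝ} {c : ℝ} (hf : ∀ P, f P = (P - c) ^ 2 + f c)
    (hg : g c ≤ f c) (P : ℝ) (hP : ∀ Q, max (f P) (g P) ≤ max (f Q) (g Q)) : P = c := by
  have h := (le_max_left _ _).trans (hP c)
  rw [max_eq_left hg, hf P] at h
  have h0 : (P - c) ^ 2 = 0 := le_antisymm (by linarith) (sq_nonneg _)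
  exact sub_eq_zero.mp (pow_eq_zero_iff two_ne_zero |>.mp h0)

/-- Non-additivity of the MAX OWA premium principle (failure of P5): the maxima of the
experts' collective losses for the risks `X`, `Y` and `X + Y` have unique global
minimizers `1/5`, `7/20` and `1/2` respectively, while `1/2 ≠ 1/5 + 7/20`. -/
theorem owa_max_premium_not_additive :
    (∀ P : ℝ,
      max ((1 / 5 : ℝ) ^ 2 - (2 / 5) * (1 / 5) + 6 / 25)
          ((1 / 5 : ℝ) ^ 2 - (1 / 5) * (1 / 5) + 11 / 100) ≤
        max (P ^ 2 - (2 / 5) * P + 6 / 25) (P ^ 2 - (1 / 5) * P + 11 / 100)) ∧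
    (∀ P : ℝ,
      (∀ Q : ℝ, max (P ^ 2 - (2 / 5) * P + 6 / 25) (P ^ 2 - (1 / 5) * P + 11 / 100) ≤
          max (Q ^ 2 - (2 / 5) * Q + 6 / 25) (Q ^ 2 - (1 / 5) * Q + 11 / 100)) →
        P = 1 / 5) ∧
    (∀ P : ℝ,
      max ((7 / 20 : ℝ) ^ 2 - (3 / 5) * (7 / 20) + 39 / 100)
          ((7 / 20 : ℝ) ^ 2 - (7 / 10) * (7 / 20) + 189 / 400) ≤
        max (P ^ 2 - (3 / 5) * P + 39 / 100) (P ^ 2 - (7 / 10) * P + 189 / 400)) ∧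
    (∀ P : ℝ,
      (∀ Q : ℝ, max (P ^ 2 - (3 / 5) * P + 39 / 100) (P ^ 2 - (7 / 10) * P + 189 / 400) ≤
          max (Q ^ 2 - (3 / 5) * Q + 39 / 100) (Q ^ 2 - (7 / 10) * Q + 189 / 400)) →
        P = 7 / 20) ∧
    (∀ P : ℝ,
      max ((1 / 2 : ℝ) ^ 2 - (1 / 2) + 3 / 4)
          ((1 / 2 : ℝ) ^ 2 - (9 / 10) * (1 / 2) + 261 / 400) ≤
        max (P ^ 2 - P + 3 / 4) (P ^ 2 - (9 / 10) * P + 261 / 400)) ∧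
    (∀ P : ℝ,
      (∀ Q : ℝ, max (P ^ 2 - P + 3 / 4) (P ^ 2 - (9 / 10) * P + 261 / 400) ≤
          max (Q ^ 2 - Q + 3 / 4) (Q ^ 2 - (9 / 10) * Q + 261 / 400)) →
        P = 1 / 2) ∧
    (1 / 2 : ℝ) ≠ 1 / 5 + 7 / 20 := by
  refine ⟨?_, ?_, ?_, ?_, ?_, ?_, by norm_num⟩
  · exact max_ge_of_vertex (f := fun P => P ^ 2 - (2 / 5) * P + 6 / 25)
      (g := fun P => P ^ 2 - (1 / 5) * P + 11 / 100) (c := 1 / 5)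
      (fun P => by ring) (by norm_num)
  · exact eq_of_max_minimal (f := fun P => P ^ 2 - (2 / 5) * P + 6 / 25)
      (g := fun P => P ^ 2 - (1 / 5) * P + 11 / 100) (c := 1 / 5)
      (fun P => by ring) (by norm_num)
  · intro P
    rw [max_comm, max_comm (P ^ 2 - _ + _)]
    exact max_ge_of_vertex (f := fun P => P ^ 2 - (7 / 10) * P + 189 / 400)
      (g := fun P => P ^ 2 - (3 / 5) * P + 39 / 100) (c := 7 / 20)
      (fun P => by ring) (by norm_num) P
  · intro P hP
    refine eq_of_max_minimal (f := fun P => P ^ 2 - (7 / 10) * P + 189 / 400)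
      (g := fun P => P ^ 2 - (3 / 5) * P + 39 / 100) (c := 7 / 20)
      (fun P => by ring) (by norm_num) P fun Q => ?_
    simpa only [max_comm] using hP Q
  · exact max_ge_of_vertex (f := fun P => P ^ 2 - P + 3 / 4)
      (g := fun P => P ^ 2 - (9 / 10) * P + 261 / 400) (c := 1 / 2)
      (fun P => by ring) (by norm_num)
  · exact eq_of_max_minimal (f := fun P => P ^ 2 - P + 3 / 4)
      (g := fun P => P ^ 2 - (9 / 10) * P + 261 / 400) (c := 1 / 2)
      (fun P => by ring) (by norm_num)
end
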